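/- Let d ≥ 1, 0 < λ < d, and let f_n, f be measurable (complex-valued) functions on ℝ^d such that f_n(x) → f(x) for a.e. x ∈ ℝ^d and sup_n I_λ(f_n) < ∞. Then ∬_{ℝ^d×ℝ^d} ( \overline{f_n(x)} − \overline{f(x)} ) f(x) \overline{f(y)} ( f_n(y) − f(y) ) |x−y|^{−λ} dx dy → 0 as n → ∞. -/

import Mathlib

open MeasureTheory Filter ENNReal

noncomputable section

/-- The Riesz energy `I_λ(g) = ∬ |g(x)|² |g(y)|² |x-y|^{-λ} dx dy`. -/
def rieszEnergy (d : ℕ) (lam : ℝ) (g : EuclideanSpace ℝ (Fin d) → ℂ) : ℝ≥0∞ :=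
  ∫⁻ x, ∫⁻ y, (‖g x‖₊ : ℝ≥0∞) ^ 2 * (‖g y‖₊ : ℝ≥0∞) ^ 2 *
    ENNReal.ofReal (‖x - y‖ ^ (-lam))

/-!
Put `gₙ = fₙ - f`. The Riesz kernel is comparable to a positive definite kernel,
`|x - y|^{-λ} ≍ ∫₀^∞ |B(x, r) ∩ B(y, r)| r^{-λ-d-1} dr`, whose energy is the integral of the square
of a linear functional of the density. Hence the Riesz energy is subadditive up to a constant, and
with Fatou's lemma for `f` this bounds the energies of the `gₙ`. So the functions
`|gₙ(x)| |gₙ(y)|` are bounded in `L²(|x - y|^{-λ} dx dy)` and tend to `0` almost everywhere;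
by Young's inequality and dominated convergence, their pairings with the fixed `L²` function
`|f(x)| |f(y)|` tend to `0`.
-/

open Metric Set Topology
open scoped NNReal ComplexConjugate

theorem ennreal_add_sq_le (a b : ℝ≥0∞) : (a + b) ^ 2 ≤ 2 * (a ^ 2 + b ^ 2) := by
  have h := ENNReal.rpow_add_le_mul_rpow_add_rpow a b one_le_two
  norm_num only [ENNReal.rpow_one, ENNReal.rpow_two] at h
  exact h

theorem exists_mul_le_mul_rpow_add_mul_rpow {p q : ℝ} (hpq : p.HolderConjugate q) {c : ℝ≥0∞}
    (hc : c ≠ 0) (hc' : c ≠ ⊤) :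
    ∃ C : ℝ≥0∞, C ≠ ⊤ ∧ ∀ a b : ℝ≥0∞, a * b ≤ c * a ^ p + C * b ^ q := by
  set η : ℝ≥0∞ := c ^ p⁻¹
  have hη : η ≠ 0 := (ENNReal.rpow_pos (pos_iff_ne_zero.2 hc) hc').ne'
  have hη' : η ≠ ⊤ := ENNReal.rpow_ne_top_of_nonneg (inv_nonneg.2 hpq.nonneg) hc'
  have hηp : η ^ p = c := ENNReal.rpow_inv_rpow hpq.ne_zero c
  have div_ofReal_le {r : ℝ} (hr : 1 ≤ r) (z : ℝ≥0∞) : z / ENNReal.ofReal r ≤ z :=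
    ENNReal.div_le_of_le_mul (le_mul_of_one_le_right' (ENNReal.one_le_ofReal.2 hr))
  refine ⟨η⁻¹ ^ q, ENNReal.rpow_ne_top_of_nonneg hpq.symm.nonneg (ENNReal.inv_ne_top.2 hη),
    fun a b => ?_⟩
  calc a * b = (η * a) * (η⁻¹ * b) := by
        rw [mul_mul_mul_comm, ENNReal.mul_inv_cancel hη hη', one_mul]
    _ ≤ (η * a) ^ p / ENNReal.ofReal p + (η⁻¹ * b) ^ q / ENNReal.ofReal q :=
        ENNReal.young_inequality _ _ hpq
    _ ≤ (η * a) ^ p + (η⁻¹ * b) ^ q :=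
        add_le_add (div_ofReal_le hpq.lt.le _) (div_ofReal_le hpq.symm.lt.le _)
    _ = c * a ^ p + η⁻¹ ^ q * b ^ q := by
        rw [ENNReal.mul_rpow_of_nonneg _ _ hpq.nonneg,
          ENNReal.mul_rpow_of_nonneg _ _ hpq.symm.nonneg, hηp]

section WeakConvergence

variable {Ω ι : Type*} [MeasurableSpace Ω] {m : Measure Ω} {l : Filter ι}
  {p q : ℝ} {G : ι → Ω → ℝ≥0∞} {w : Ω → ℝ≥0∞}

theorem tendsto_lintegral_mul_sub_const_mul_rpow [l.IsCountablyGenerated]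
    (hpq : p.HolderConjugate q) (hG : ∀ i, AEMeasurable (G i) m) (hw : AEMeasurable w m)
    (hlim : ∀ᵐ ω ∂m, Tendsto (fun i => G i ω) l (𝓝 0)) (hwq : ∫⁻ ω, w ω ^ q ∂m ≠ ⊤)
    {c : ℝ≥0∞} (hc : c ≠ 0) (hc' : c ≠ ⊤) :
    Tendsto (fun i => ∫⁻ ω, (G i ω * w ω - c * G i ω ^ p) ∂m) l (𝓝 0) := by
  obtain ⟨C, hC, hyoung⟩ := exists_mul_le_mul_rpow_add_mul_rpow hpq hc hc'
  have hw_fin : ∀ᵐ ω ∂m, w ω ^ q < ⊤ := ae_lt_top' (hw.pow_const q) hwq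
  rw [← lintegral_zero (μ := m)]
  refine tendsto_lintegral_filter_of_dominated_convergence' (fun ω => C * w ω ^ q)
    (.of_forall fun i => ((hG i).mul hw).sub (((hG i).pow_const p).const_mul c))
    (.of_forall fun i => .of_forall fun ω => tsub_le_iff_left.2 (hyoung _ _)) ?_ ?_
  · rw [lintegral_const_mul' _ _ hC]
    exact ENNReal.mul_ne_top hC hwq
  · filter_upwards [hlim, hw_fin] with ω hω hwω
    have hw_ne_top : w ω ≠ ⊤ := ((ENNReal.rpow_lt_top_iff_of_pos hpq.symm.pos).1 hwω).ne
    have hmul : Tendsto (fun i => G i ω * w ω) l (𝓝 0) := by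
      simpa only [zero_mul] using ENNReal.Tendsto.mul_const hω (.inr hw_ne_top)
    exact tendsto_of_tendsto_of_tendsto_of_le_of_le tendsto_const_nhds hmul
      (fun _ => zero_le) fun _ => tsub_le_self

theorem tendsto_lintegral_mul_of_lintegral_rpow_le [l.IsCountablyGenerated]
    (hpq : p.HolderConjugate q) (hG : ∀ i, AEMeasurable (G i) m) (hw : AEMeasurable w m)
    (hlim : ∀ᵐ ω ∂m, Tendsto (fun i => G i ω) l (𝓝 0)) {B : ℝ≥0∞} (hB : B ≠ ⊤)
    (hGB : ∀ i, ∫⁻ ω, G i ω ^ p ∂m ≤ B) (hwq : ∫⁻ ω, w ω ^ q ∂m ≠ ⊤) :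
    Tendsto (fun i => ∫⁻ ω, G i ω * w ω ∂m) l (𝓝 0) := by
  refine ENNReal.tendsto_nhds_zero.2 fun ε hε => ?_
  have hε2 : ε / 2 ≠ 0 := (ENNReal.half_pos hε.ne').ne'
  obtain ⟨c, hc, hcB⟩ := ENNReal.exists_nnreal_pos_mul_lt hB hε2
  have hlim_sub := tendsto_lintegral_mul_sub_const_mul_rpow hpq hG hw hlim hwq
    (ENNReal.coe_ne_zero.2 hc.ne') ENNReal.coe_ne_top
  filter_upwards [ENNReal.tendsto_nhds_zero.1 hlim_sub (ε / 2) (pos_iff_ne_zero.2 hε2)] with i hi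
  calc ∫⁻ ω, G i ω * w ω ∂m
      ≤ ∫⁻ ω, ((G i ω * w ω - c * G i ω ^ p) + c * G i ω ^ p) ∂m :=
        lintegral_mono fun _ => le_tsub_add
    _ = ∫⁻ ω, (G i ω * w ω - c * G i ω ^ p) ∂m + c * ∫⁻ ω, G i ω ^ p ∂m := by
        rw [lintegral_add_right' _ (((hG i).pow_const p).const_mul _),
          lintegral_const_mul' _ _ ENNReal.coe_ne_top]
    _ ≤ ε / 2 + c * B := by gcongr; exact hGB i
    _ ≤ ε / 2 + ε / 2 := by gcongr
    _ = ε := ENNReal.add_halves ε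

end WeakConvergence

/-- The energy `∬ ρ(x) ρ(y) k(x, y) dμ(x) dμ(y)` of a density `ρ` with respect to a nonnegative
kernel `k`; the Riesz energy of `g` is the energy of the density `|g|²`. -/
def kernelEnergy {X : Type*} [MeasurableSpace X] (μ : Measure X) (k : X → X → ℝ≥0∞)
    (ρ : X → ℝ≥0∞) : ℝ≥0∞ :=
  ∫⁻ x, ∫⁻ y, ρ x * ρ y * k x y ∂μ ∂μ

/-- The measure `k(x, y) dμ(x) dμ(y)` on pairs, against which `kernelEnergy μ k ρ` is the integral
of `ρ(x) ρ(y)`. -/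
def interactionMeasure {X : Type*} [MeasurableSpace X] (μ : Measure X) (k : X → X → ℝ≥0∞) :
    Measure (X × X) :=
  (μ.prod μ).withDensity (Function.uncurry k)

/-- The nonnegative positive definite kernel with feature map `φ`: the kernel sending `(x, y)` to
the `L²(ν)` pairing of `φ x` and `φ y`. -/
def gramKernel {X T : Type*} [MeasurableSpace T] (ν : Measure T) (φ : X → T → ℝ≥0∞) (x y : X) :
    ℝ≥0∞ :=
  ∫⁻ t, φ x t * φ y t ∂ν

/-- The energy of `k` satisfies the triangle inequality up to a finite constant, as it does
for kernels comparable to a positive definite one. -/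
def IsEnergyQuasiSubadditive {X : Type*} [MeasurableSpace X] (μ : Measure X)
    (k : X → X → ℝ≥0∞) : Prop :=
  ∃ C : ℝ≥0∞, C ≠ ⊤ ∧ ∀ ρ σ : X → ℝ≥0∞, AEMeasurable ρ μ → AEMeasurable σ μ →
    kernelEnergy μ k (ρ + σ) ≤ C * (kernelEnergy μ k ρ + kernelEnergy μ k σ)

section KernelEnergy

variable {X T : Type*} [MeasurableSpace X] [MeasurableSpace T] {μ : Measure X} {ν : Measure T}
  {k k' : X → X → ℝ≥0∞} {ρ σ : X → ℝ≥0∞} {φ : X → T → ℝ≥0∞}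

theorem kernelEnergy_mono (h : ∀ x, ρ x ≤ σ x) : kernelEnergy μ k ρ ≤ kernelEnergy μ k σ :=
  lintegral_mono fun x => lintegral_mono fun y => by gcongr <;> apply h

theorem kernelEnergy_const_mul {c : ℝ≥0∞} (hc : c ≠ ⊤) :
    kernelEnergy μ k (fun x => c * ρ x) = c ^ 2 * kernelEnergy μ k ρ := by
  have hc2 : c ^ 2 ≠ ⊤ := ENNReal.pow_ne_top hc
  simp only [kernelEnergy, ← lintegral_const_mul' _ _ hc2]
  exact lintegral_congr fun x => lintegral_congr fun y => by ring

theorem kernelEnergy_le_const_mul_of_kernel_le {C : ℝ≥0∞} (hC : C ≠ ⊤)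
    (h : ∀ x, ∀ᵐ y ∂μ, k x y ≤ C * k' x y) : kernelEnergy μ k ρ ≤ C * kernelEnergy μ k' ρ := by
  simp only [kernelEnergy, ← lintegral_const_mul' _ _ hC]
  refine lintegral_mono fun x => lintegral_mono_ae ?_
  filter_upwards [h x] with y hy
  calc ρ x * ρ y * k x y ≤ ρ x * ρ y * (C * k' x y) := by gcongr
    _ = C * (ρ x * ρ y * k' x y) := by ring

theorem interactionMeasure_absolutelyContinuous : interactionMeasure μ k ≪ μ.prod μ :=
  withDensity_absolutelyContinuous _ _

theorem kernelEnergy_eq_lintegral_interactionMeasure [SFinite μ]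
    (hk : Measurable (Function.uncurry k)) (hρ : AEMeasurable ρ μ) :
    kernelEnergy μ k ρ = ∫⁻ z, ρ z.1 * ρ z.2 ∂interactionMeasure μ k := by
  have hρρ : AEMeasurable (fun z : X × X => ρ z.1 * ρ z.2) (μ.prod μ) :=
    hρ.comp_fst.mul hρ.comp_snd
  rw [interactionMeasure, lintegral_withDensity_eq_lintegral_mul₀ hk.aemeasurable hρρ,
    lintegral_prod _ (hk.aemeasurable.mul hρρ)]
  exact lintegral_congr fun x => lintegral_congr fun y => mul_comm _ _

theorem ae_interactionMeasure_of_ae {P : X → Prop} (h : ∀ᵐ x ∂μ, P x) :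
    ∀ᵐ z ∂interactionMeasure μ k, P z.1 ∧ P z.2 :=
  interactionMeasure_absolutelyContinuous.ae_le
    ((Measure.quasiMeasurePreserving_fst.ae h).and (Measure.quasiMeasurePreserving_snd.ae h))

theorem aemeasurable_mul_interactionMeasure (hρ : AEMeasurable ρ μ) :
    AEMeasurable (fun z => ρ z.1 * ρ z.2) (interactionMeasure μ k) :=
  (hρ.comp_fst.fun_mul hρ.comp_snd).mono_ac interactionMeasure_absolutelyContinuous

theorem kernelEnergy_liminf_le [SFinite μ] {ι : Type*} {l : Filter ι} [l.IsCountablyGenerated]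
    (hk : Measurable (Function.uncurry k)) {ρ : ι → X → ℝ≥0∞} (hρ : ∀ i, AEMeasurable (ρ i) μ)
    (hσ : AEMeasurable σ μ) (h : ∀ᵐ x ∂μ, σ x ≤ liminf (fun i => ρ i x) l) :
    kernelEnergy μ k σ ≤ liminf (fun i => kernelEnergy μ k (ρ i)) l := by
  simp only [kernelEnergy_eq_lintegral_interactionMeasure hk hσ,
    fun i => kernelEnergy_eq_lintegral_interactionMeasure hk (hρ i)]
  refine le_trans (lintegral_mono_ae ?_) (lintegral_liminf_le' fun i =>
    aemeasurable_mul_interactionMeasure (hρ i))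
  filter_upwards [ae_interactionMeasure_of_ae h] with z hz
  exact (mul_le_mul' hz.1 hz.2).trans ENNReal.le_liminf_mul

theorem kernelEnergy_gramKernel [SFinite μ] [SFinite ν] (hφ : Measurable (Function.uncurry φ))
    (hρ : AEMeasurable ρ μ) :
    kernelEnergy μ (gramKernel ν φ) ρ = ∫⁻ t, (∫⁻ x, ρ x * φ x t ∂μ) ^ 2 ∂ν := by
  have hφ_left (x : X) : Measurable (φ x) := hφ.of_uncurry_left
  have hφ_right (t : T) : Measurable fun x => φ x t := hφ.of_uncurry_right
  have hρφ : AEMeasurable (fun z : X × T => ρ z.1 * φ z.1 z.2) (μ.prod ν) :=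
    hρ.comp_fst.mul hφ.aemeasurable
  have hint : AEMeasurable (fun t => ∫⁻ y, ρ y * φ y t ∂μ) ν := hρφ.lintegral_prod_left'
  calc kernelEnergy μ (gramKernel ν φ) ρ
      = ∫⁻ x, ∫⁻ y, ∫⁻ t, ρ x * φ x t * (ρ y * φ y t) ∂ν ∂μ ∂μ := by
        refine lintegral_congr fun x => lintegral_congr fun y => ?_
        rw [gramKernel, ← lintegral_const_mul _ ((hφ_left x).fun_mul (hφ_left y))]
        exact lintegral_congr fun t => mul_mul_mul_comm _ _ _ _
    _ = ∫⁻ x, ∫⁻ t, ρ x * φ x t * ∫⁻ y, ρ y * φ y t ∂μ ∂ν ∂μ := by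
        refine lintegral_congr fun x => ?_
        rw [lintegral_lintegral_swap
          ((((hφ_left x).const_mul (ρ x)).comp measurable_snd).aemeasurable.mul hρφ)]
        exact lintegral_congr fun t =>
          lintegral_const_mul'' _ (hρ.mul (hφ_right t).aemeasurable)
    _ = ∫⁻ t, ∫⁻ x, ρ x * φ x t * ∫⁻ y, ρ y * φ y t ∂μ ∂μ ∂ν :=
        lintegral_lintegral_swap (hρφ.mul hint.comp_snd)
    _ = ∫⁻ t, (∫⁻ x, ρ x * φ x t ∂μ) ^ 2 ∂ν := by
        refine lintegral_congr fun t => ?_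
        rw [lintegral_mul_const'' _ (hρ.fun_mul (hφ_right t).aemeasurable), sq]

theorem kernelEnergy_gramKernel_add_le [SFinite μ] [SFinite ν]
    (hφ : Measurable (Function.uncurry φ)) (hρ : AEMeasurable ρ μ) (hσ : AEMeasurable σ μ) :
    kernelEnergy μ (gramKernel ν φ) (ρ + σ) ≤
      2 * (kernelEnergy μ (gramKernel ν φ) ρ + kernelEnergy μ (gramKernel ν φ) σ) := by
  have hint : AEMeasurable (fun t => ∫⁻ x, ρ x * φ x t ∂μ) ν :=
    (hρ.comp_fst.mul hφ.aemeasurable : AEMeasurable _ (μ.prod ν)).lintegral_prod_left'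
  rw [kernelEnergy_gramKernel hφ hρ, kernelEnergy_gramKernel hφ hσ,
    kernelEnergy_gramKernel hφ (hρ.add hσ), ← lintegral_add_left' (hint.pow_const 2),
    ← lintegral_const_mul' _ _ ofNat_ne_top]
  refine lintegral_mono fun t => ?_
  simp only [Pi.add_apply, add_mul]
  rw [lintegral_add_left' (hρ.fun_mul hφ.of_uncurry_right.aemeasurable)]
  exact ennreal_add_sq_le _ _

theorem isEnergyQuasiSubadditive_of_comparable_gramKernel [SFinite μ] [SFinite ν]
    (hφ : Measurable (Function.uncurry φ)) {C₁ C₂ : ℝ≥0∞} (hC₁ : C₁ ≠ ⊤) (hC₂ : C₂ ≠ ⊤)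
    (hle : ∀ x, ∀ᵐ y ∂μ, k x y ≤ C₁ * gramKernel ν φ x y)
    (hge : ∀ x, ∀ᵐ y ∂μ, gramKernel ν φ x y ≤ C₂ * k x y) :
    IsEnergyQuasiSubadditive μ k := by
  refine ⟨C₁ * (2 * C₂), by finiteness, fun ρ σ hρ hσ => ?_⟩
  calc kernelEnergy μ k (ρ + σ)
      ≤ C₁ * kernelEnergy μ (gramKernel ν φ) (ρ + σ) :=
        kernelEnergy_le_const_mul_of_kernel_le hC₁ hle
    _ ≤ C₁ * (2 * (kernelEnergy μ (gramKernel ν φ) ρ + kernelEnergy μ (gramKernel ν φ) σ)) := by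
        gcongr; exact kernelEnergy_gramKernel_add_le hφ hρ hσ
    _ ≤ C₁ * (2 * (C₂ * kernelEnergy μ k ρ + C₂ * kernelEnergy μ k σ)) := by
        gcongr <;> exact kernelEnergy_le_const_mul_of_kernel_le hC₂ hge
    _ = C₁ * (2 * C₂) * (kernelEnergy μ k ρ + kernelEnergy μ k σ) := by ring

end KernelEnergy

section CrossTerm

variable {X ι F : Type*} [MeasurableSpace X] {μ : Measure X} {k : X → X → ℝ≥0∞}
  [NormedAddCommGroup F] {l : Filter ι} {f : ι → X → F} {f₀ : X → F} {M : ℝ≥0∞}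

theorem exists_kernelEnergy_enorm_sub_sq_le (hsub : IsEnergyQuasiSubadditive μ k) :
    ∃ C : ℝ≥0∞, C ≠ ⊤ ∧ ∀ g h : X → F, AEStronglyMeasurable g μ → AEStronglyMeasurable h μ →
      kernelEnergy μ k (fun x => ‖g x - h x‖ₑ ^ 2) ≤
        C * (kernelEnergy μ k (fun x => ‖g x‖ₑ ^ 2) + kernelEnergy μ k (fun x => ‖h x‖ₑ ^ 2)) := by
  obtain ⟨C, hC, hadd⟩ := hsub
  refine ⟨2 ^ 2 * C, by finiteness, fun g h hg hh => ?_⟩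
  have henorm (x : X) : ‖g x - h x‖ₑ ^ 2 ≤ 2 * (‖g x‖ₑ ^ 2 + ‖h x‖ₑ ^ 2) :=
    (pow_le_pow_left' enorm_sub_le 2).trans (ennreal_add_sq_le _ _)
  refine (kernelEnergy_mono henorm).trans ?_
  rw [kernelEnergy_const_mul ofNat_ne_top, mul_assoc]
  gcongr
  exact hadd _ _ (hg.enorm.pow_const 2) (hh.enorm.pow_const 2)

variable [l.IsCountablyGenerated] [SFinite μ]

theorem kernelEnergy_enorm_sq_le_of_tendsto [l.NeBot] (hk : Measurable (Function.uncurry k))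
    (hf : ∀ i, AEStronglyMeasurable (f i) μ)
    (hlim : ∀ᵐ x ∂μ, Tendsto (fun i => f i x) l (𝓝 (f₀ x)))
    (hM : ∀ i, kernelEnergy μ k (fun x => ‖f i x‖ₑ ^ 2) ≤ M) :
    kernelEnergy μ k (fun x => ‖f₀ x‖ₑ ^ 2) ≤ M := by
  have hf₀ := aestronglyMeasurable_of_tendsto_ae l hf hlim
  refine (kernelEnergy_liminf_le (l := l) hk (fun i => (hf i).enorm.pow_const 2)
    (hf₀.enorm.pow_const 2) ?_).trans (liminf_le_of_frequently_le' (.of_forall hM))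
  filter_upwards [hlim] with x hx
  exact (ENNReal.Tendsto.pow hx.enorm).liminf_eq.ge

theorem kernelEnergy_enorm_sq_eq (hk : Measurable (Function.uncurry k)) {g : X → F}
    (hg : AEStronglyMeasurable g μ) :
    kernelEnergy μ k (fun x => ‖g x‖ₑ ^ 2) =
      ∫⁻ z, (‖g z.1‖ₑ * ‖g z.2‖ₑ) ^ (2 : ℝ) ∂interactionMeasure μ k := by
  simp only [kernelEnergy_eq_lintegral_interactionMeasure hk (hg.enorm.pow_const 2),
    ENNReal.rpow_two, mul_pow]

theorem tendsto_kernelEnergy_enorm_sub_mul_enorm [l.NeBot]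
    (hk : Measurable (Function.uncurry k)) (hsub : IsEnergyQuasiSubadditive μ k)
    (hf : ∀ i, AEStronglyMeasurable (f i) μ)
    (hlim : ∀ᵐ x ∂μ, Tendsto (fun i => f i x) l (𝓝 (f₀ x)))
    (hM : M ≠ ⊤) (hfM : ∀ i, kernelEnergy μ k (fun x => ‖f i x‖ₑ ^ 2) ≤ M) :
    Tendsto (fun i => kernelEnergy μ k (fun x => ‖f i x - f₀ x‖ₑ * ‖f₀ x‖ₑ)) l (𝓝 0) := by
  have hf₀ := aestronglyMeasurable_of_tendsto_ae l hf hlim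
  have hf₀M := kernelEnergy_enorm_sq_le_of_tendsto hk hf hlim hfM
  obtain ⟨C, hC, hdiff⟩ := exists_kernelEnergy_enorm_sub_sq_le (F := F) hsub
  have hdiffM (i : ι) : kernelEnergy μ k (fun x => ‖f i x - f₀ x‖ₑ ^ 2) ≤ C * (M + M) :=
    (hdiff _ _ (hf i) hf₀).trans (by gcongr; exact hfM i)
  have hlim_pair : ∀ᵐ z ∂interactionMeasure μ k,
      Tendsto (fun i => ‖f i z.1 - f₀ z.1‖ₑ * ‖f i z.2 - f₀ z.2‖ₑ) l (𝓝 0) := by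
    have hlim_enorm : ∀ᵐ x ∂μ, Tendsto (fun i => ‖f i x - f₀ x‖ₑ) l (𝓝 0) := by
      filter_upwards [hlim] with x hx
      simpa only [sub_self, enorm_zero] using (hx.sub_const (f₀ x)).enorm
    filter_upwards [ae_interactionMeasure_of_ae hlim_enorm] with z hz
    simpa only [zero_mul] using
      ENNReal.Tendsto.mul hz.1 (.inr zero_ne_top) hz.2 (.inr zero_ne_top)
  refine (tendsto_lintegral_mul_of_lintegral_rpow_le .two_two
    (fun i => aemeasurable_mul_interactionMeasure ((hf i).fun_sub hf₀).enorm)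
    (aemeasurable_mul_interactionMeasure hf₀.enorm) hlim_pair (B := C * (M + M)) (by finiteness)
    (fun i => ?_) ?_).congr fun i => ?_
  · exact (kernelEnergy_enorm_sq_eq hk ((hf i).sub hf₀)).symm.trans_le (hdiffM i)
  · exact (kernelEnergy_enorm_sq_eq hk hf₀).symm.trans_ne (hf₀M.trans_lt hM.lt_top).ne
  · rw [kernelEnergy_eq_lintegral_interactionMeasure hk
      (((hf i).fun_sub hf₀).enorm.fun_mul hf₀.enorm)]
    exact lintegral_congr fun z => mul_mul_mul_comm _ _ _ _

end CrossTerm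

/-- Ahlfors `Q`-regularity: the ball of radius `r` has measure comparable to `r ^ Q`, uniformly in
the center and over all radii `r > 0`. -/
def IsAhlforsRegular {X : Type*} [PseudoMetricSpace X] [MeasurableSpace X] (μ : Measure X)
    (Q : ℝ) : Prop :=
  ∃ c C : ℝ≥0, c ≠ 0 ∧ ∀ (x : X) (r : ℝ), 0 < r →
    c * ENNReal.ofReal (r ^ Q) ≤ μ (ball x r) ∧ μ (ball x r) ≤ C * ENNReal.ofReal (r ^ Q)

/-- The Riesz kernel `d(x, y) ^ (-λ)`. Its value on the diagonal is the junk value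
`0 ^ (-λ) = 0` rather than `∞`; the diagonal is negligible for Ahlfors regular measures of
positive dimension. -/
def rieszKernel {X : Type*} [PseudoMetricSpace X] (lam : ℝ) (x y : X) : ℝ≥0∞ :=
  ENNReal.ofReal (dist x y ^ (-lam))

/-- The measure `r ^ a dr` on the positive half-line of scales. -/
def scaleMeasure (a : ℝ) : Measure ℝ :=
  (volume.restrict (Ioi 0)).withDensity fun r => ENNReal.ofReal (r ^ a)

instance (a : ℝ) : SFinite (scaleMeasure a) := by
  unfold scaleMeasure; infer_instance

/-- The indicator of `z ∈ ball x r` as a function of the scale and position `(r, z)`. It is the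
feature map of a positive definite kernel comparable to the Riesz kernel. -/
def ballIndicator {X : Type*} [PseudoMetricSpace X] (x : X) (t : ℝ × X) : ℝ≥0∞ :=
  (ball x t.1).indicator 1 t.2

theorem isAhlforsRegular_addHaar {E : Type*} [NormedAddCommGroup E] [NormedSpace ℝ E]
    [FiniteDimensional ℝ E] [MeasurableSpace E] [BorelSpace E] (μ : Measure E)
    [μ.IsAddHaarMeasure] : IsAhlforsRegular μ (Module.finrank ℝ E) := by
  have hunit : ((μ (ball 0 1)).toNNReal : ℝ≥0∞) = μ (ball 0 1) :=
    ENNReal.coe_toNNReal measure_ball_lt_top.ne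
  have hunit_ne_zero : (μ (ball 0 1)).toNNReal ≠ 0 := by
    rw [← ENNReal.coe_ne_zero, hunit]
    exact (measure_ball_pos μ 0 one_pos).ne'
  have hball (x : E) (r : ℝ) (hr : 0 < r) :
      μ (ball x r) = μ (ball 0 1) * ENNReal.ofReal (r ^ (Module.finrank ℝ E : ℝ)) := by
    rw [Measure.addHaar_ball_of_pos μ x hr, Real.rpow_natCast, mul_comm]
  refine ⟨_, (μ (ball 0 1)).toNNReal, hunit_ne_zero, fun x r hr => ?_⟩
  rw [hunit, hball x r hr]
  exact ⟨le_rfl, le_rfl⟩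

theorem lintegral_Ioi_rpow_neg_sub_one {lam s : ℝ} (hlam : 0 < lam) (hs : 0 < s) :
    ∫⁻ r in Ioi s, ENNReal.ofReal (r ^ (-lam - 1)) = ENNReal.ofReal (s ^ (-lam) / lam) := by
  have hexp : -lam - 1 < -1 := by linarith
  have hnonneg : 0 ≤ᵐ[volume.restrict (Ioi s)] fun r => r ^ (-lam - 1) := by
    filter_upwards [self_mem_ae_restrict measurableSet_Ioi] with r hr
    exact Real.rpow_nonneg (hs.trans hr).le _
  rw [← ofReal_integral_eq_lintegral_ofReal (integrableOn_Ioi_rpow_of_lt hexp hs) hnonneg,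
    integral_Ioi_rpow_of_lt hexp hs, sub_add_cancel, neg_div_neg_eq]

theorem ofReal_rpow_mul_const_mul_rpow {r : ℝ} (hr : 0 < r) (lam Q : ℝ) (c : ℝ≥0∞) :
    ENNReal.ofReal (r ^ (-lam - Q - 1)) * (c * ENNReal.ofReal (r ^ Q)) =
      c * ENNReal.ofReal (r ^ (-lam - 1)) := by
  rw [mul_left_comm, ← ENNReal.ofReal_mul (by positivity), ← Real.rpow_add hr]
  ring_nf

section RieszKernel

variable {X : Type*} [PseudoMetricSpace X] [MeasurableSpace X] {μ : Measure X} {lam Q : ℝ}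
  {x y : X}

theorem IsAhlforsRegular.ae_dist_pos (hμ : IsAhlforsRegular μ Q) (hQ : 0 < Q) (x : X) :
    ∀ᵐ y ∂μ, 0 < dist x y := by
  obtain ⟨_, C, -, hball⟩ := hμ
  have hle (r : ℝ) (hr : 0 < r) : μ {y | ¬0 < dist x y} ≤ C * ENNReal.ofReal (r ^ Q) := by
    refine (measure_mono fun y hy => ?_).trans (hball x r hr).2
    exact mem_ball'.2 ((not_lt.1 hy).trans_lt hr)
  have hrpow : Tendsto (fun r : ℝ => ENNReal.ofReal (r ^ Q)) (𝓝[>] 0) (𝓝 0) := by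
    have hcont := ENNReal.tendsto_ofReal ((Real.continuous_rpow_const hQ.le).tendsto 0)
    rw [Real.zero_rpow hQ.ne', ENNReal.ofReal_zero] at hcont
    exact tendsto_nhdsWithin_of_tendsto_nhds hcont
  have hlim : Tendsto (fun r : ℝ => C * ENNReal.ofReal (r ^ Q)) (𝓝[>] 0) (𝓝 0) := by
    simpa only [mul_zero] using ENNReal.Tendsto.const_mul hrpow (.inr ENNReal.coe_ne_top)
  refine nonpos_iff_eq_zero.1 (ge_of_tendsto hlim ?_)
  filter_upwards [self_mem_nhdsWithin] using hle

theorem enorm_integral_cross_term_le_kernelEnergy {𝕜 : Type*} [RCLike 𝕜] (g h : X → 𝕜) :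
    ‖∫ x, ∫ y, (conj (g x) - conj (h x)) * h x * conj (h y) * (g y - h y) *
        ((dist x y ^ (-lam) : ℝ) : 𝕜) ∂μ ∂μ‖ₑ ≤
      kernelEnergy μ (rieszKernel lam) (fun x => ‖g x - h x‖ₑ * ‖h x‖ₑ) := by
  refine (enorm_integral_le_lintegral_enorm _).trans (lintegral_mono fun x => ?_)
  refine (enorm_integral_le_lintegral_enorm _).trans (lintegral_mono fun y => le_of_eq ?_)
  have enorm_kernel : ‖((dist x y ^ (-lam) : ℝ) : 𝕜)‖ₑ = rieszKernel lam x y := by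
    rw [← ofReal_norm, RCLike.norm_of_nonneg (by positivity), rieszKernel]
  simp only [← map_sub, enorm_mul, RCLike.enorm_conj, enorm_kernel]
  ring

variable [SecondCountableTopology X]

theorem IsAhlforsRegular.sigmaFinite (hμ : IsAhlforsRegular μ Q) : SigmaFinite μ := by
  obtain ⟨_, C, -, hball⟩ := hμ
  have : IsLocallyFiniteMeasure μ := ⟨fun x =>
    ⟨ball x 1, ball_mem_nhds x one_pos, (hball x 1 one_pos).2.trans_lt (by finiteness)⟩⟩
  infer_instance

variable [OpensMeasurableSpace X]

theorem measurable_rieszKernel (lam : ℝ) :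
    Measurable (Function.uncurry (rieszKernel lam : X → X → ℝ≥0∞)) :=
  (measurable_dist.pow_const (-lam)).ennreal_ofReal

theorem measurable_ballIndicator : Measurable (Function.uncurry (ballIndicator (X := X))) := by
  have hopen : IsOpen {z : X × ℝ × X | dist z.2.2 z.1 < z.2.1} :=
    isOpen_lt (by fun_prop) (by fun_prop)
  exact measurable_one.indicator hopen.measurableSet

theorem gramKernel_ballIndicator [SFinite μ] (a : ℝ) (x y : X) :
    gramKernel ((scaleMeasure a).prod μ) ballIndicator x y =
      ∫⁻ r in Ioi 0, ENNReal.ofReal (r ^ a) * μ (ball x r ∩ ball y r) := by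
  have hmeas : Measurable fun t : ℝ × X => ballIndicator x t * ballIndicator y t :=
    measurable_ballIndicator.of_uncurry_left.mul measurable_ballIndicator.of_uncurry_left
  have hoverlap (r : ℝ) :
      ∫⁻ z, ballIndicator x (r, z) * ballIndicator y (r, z) ∂μ = μ (ball x r ∩ ball y r) := by
    rw [← lintegral_indicator_one (measurableSet_ball.inter measurableSet_ball),
      inter_indicator_one]
    rfl
  rw [gramKernel, lintegral_prod _ hmeas.aemeasurable, scaleMeasure,
    lintegral_withDensity_eq_lintegral_mul _ (by fun_prop) hmeas.lintegral_prod_right']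
  simp only [Pi.mul_apply, hoverlap]

theorem gramKernel_ballIndicator_le [SFinite μ] (hlam : 0 < lam) {C : ℝ≥0∞}
    (hC : ∀ (x : X) (r : ℝ), 0 < r → μ (ball x r) ≤ C * ENNReal.ofReal (r ^ Q))
    (hxy : 0 < dist x y) :
    gramKernel ((scaleMeasure (-lam - Q - 1)).prod μ) ballIndicator x y ≤
      C * ENNReal.ofReal (2 ^ lam / lam) * rieszKernel lam x y := by
  have hhalf : 0 < dist x y / 2 := half_pos hxy
  have hdisjoint {r : ℝ} (hr : r ≤ dist x y / 2) : ball x r ∩ ball y r = ∅ :=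
    (ball_disjoint_ball (by linarith)).inter_eq
  calc gramKernel ((scaleMeasure (-lam - Q - 1)).prod μ) ballIndicator x y
      = ∫⁻ r in Ioi 0, ENNReal.ofReal (r ^ (-lam - Q - 1)) * μ (ball x r ∩ ball y r) :=
        gramKernel_ballIndicator _ x y
    _ ≤ ∫⁻ r, ENNReal.ofReal (r ^ (-lam - Q - 1)) * μ (ball x r ∩ ball y r) :=
        setLIntegral_le_lintegral _ _
    _ = ∫⁻ r in Ioi (dist x y / 2),
          ENNReal.ofReal (r ^ (-lam - Q - 1)) * μ (ball x r ∩ ball y r) := by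
        refine (setLIntegral_eq_of_support_subset fun r hr => ?_).symm
        contrapose! hr
        rw [Function.notMem_support, hdisjoint (not_lt.1 hr), measure_empty, mul_zero]
    _ ≤ ∫⁻ r in Ioi (dist x y / 2), C * ENNReal.ofReal (r ^ (-lam - 1)) := by
        refine setLIntegral_mono' measurableSet_Ioi fun r hr => ?_
        have hr_pos : 0 < r := hhalf.trans hr
        rw [← ofReal_rpow_mul_const_mul_rpow hr_pos lam Q]
        gcongr
        exact (measure_mono inter_subset_left).trans (hC x r hr_pos)
    _ = C * ENNReal.ofReal ((dist x y / 2) ^ (-lam) / lam) := by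
        rw [lintegral_const_mul _ (by fun_prop), lintegral_Ioi_rpow_neg_sub_one hlam hhalf]
    _ = C * ENNReal.ofReal (2 ^ lam / lam) * rieszKernel lam x y := by
        rw [rieszKernel, mul_assoc, ← ENNReal.ofReal_mul (by positivity),
          Real.div_rpow hxy.le zero_le_two, Real.rpow_neg zero_le_two, div_inv_eq_mul]
        ring_nf

theorem le_gramKernel_ballIndicator [SFinite μ] (hlam : 0 < lam) {c : ℝ≥0∞}
    (hc : ∀ (x : X) (r : ℝ), 0 < r → c * ENNReal.ofReal (r ^ Q) ≤ μ (ball x r))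
    (hxy : 0 < dist x y) :
    c * ENNReal.ofReal (2 ^ (-Q) * 2 ^ (-lam) / lam) * rieszKernel lam x y ≤
      gramKernel ((scaleMeasure (-lam - Q - 1)).prod μ) ballIndicator x y := by
  have hdouble : 0 < 2 * dist x y := mul_pos two_pos hxy
  have hsubset {r : ℝ} (hr : 2 * dist x y < r) : ball x (r / 2) ⊆ ball x r ∩ ball y r :=
    subset_inter (ball_subset_ball (by linarith)) (ball_subset_ball' (by linarith))
  calc c * ENNReal.ofReal (2 ^ (-Q) * 2 ^ (-lam) / lam) * rieszKernel lam x y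
      = c * ENNReal.ofReal (2 ^ (-Q)) * ENNReal.ofReal ((2 * dist x y) ^ (-lam) / lam) := by
        rw [rieszKernel, mul_assoc, mul_assoc, ← ENNReal.ofReal_mul (by positivity),
          ← ENNReal.ofReal_mul (by positivity), Real.mul_rpow zero_le_two hxy.le]
        ring_nf
    _ = ∫⁻ r in Ioi (2 * dist x y),
          c * ENNReal.ofReal (2 ^ (-Q)) * ENNReal.ofReal (r ^ (-lam - 1)) := by
        rw [lintegral_const_mul _ (by fun_prop), lintegral_Ioi_rpow_neg_sub_one hlam hdouble]
    _ ≤ ∫⁻ r in Ioi (2 * dist x y),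
          ENNReal.ofReal (r ^ (-lam - Q - 1)) * μ (ball x r ∩ ball y r) := by
        refine setLIntegral_mono' measurableSet_Ioi fun r hr => ?_
        have hr_pos : 0 < r := hdouble.trans hr
        have hhalf_rpow : 2 ^ (-Q) * r ^ Q = (r / 2) ^ Q := by
          rw [Real.div_rpow hr_pos.le zero_le_two, Real.rpow_neg zero_le_two, inv_mul_eq_div]
        rw [← ofReal_rpow_mul_const_mul_rpow hr_pos lam Q, mul_assoc c,
          ← ENNReal.ofReal_mul (by positivity), hhalf_rpow]
        gcongr
        exact (hc x (r / 2) (half_pos hr_pos)).trans (measure_mono (hsubset hr))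
    _ ≤ ∫⁻ r in Ioi 0, ENNReal.ofReal (r ^ (-lam - Q - 1)) * μ (ball x r ∩ ball y r) :=
        lintegral_mono_set (Ioi_subset_Ioi hdouble.le)
    _ = gramKernel ((scaleMeasure (-lam - Q - 1)).prod μ) ballIndicator x y :=
        (gramKernel_ballIndicator _ x y).symm

theorem IsAhlforsRegular.isEnergyQuasiSubadditive_rieszKernel (hμ : IsAhlforsRegular μ Q)
    (hQ : 0 < Q) (hlam : 0 < lam) : IsEnergyQuasiSubadditive μ (rieszKernel lam) := by
  have := hμ.sigmaFinite
  have hdist := hμ.ae_dist_pos hQ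
  obtain ⟨c, C, hc_ne_zero, hball⟩ := hμ
  set b : ℝ≥0∞ := c * ENNReal.ofReal (2 ^ (-Q) * 2 ^ (-lam) / lam)
  have hb : b ≠ 0 := mul_ne_zero (ENNReal.coe_ne_zero.2 hc_ne_zero)
    (ENNReal.ofReal_pos.2 (by positivity)).ne'
  have hb' : b ≠ ⊤ := by finiteness
  refine isEnergyQuasiSubadditive_of_comparable_gramKernel
    (ν := (scaleMeasure (-lam - Q - 1)).prod μ) (C₁ := b⁻¹)
    (C₂ := C * ENNReal.ofReal (2 ^ lam / lam)) measurable_ballIndicator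
    (ENNReal.inv_ne_top.2 hb) (by finiteness) (fun x => ?_) (fun x => ?_)
  · filter_upwards [hdist x] with y hxy
    rw [← ENNReal.mul_le_iff_le_inv hb hb']
    exact le_gramKernel_ballIndicator hlam (fun x r hr => (hball x r hr).1) hxy
  · filter_upwards [hdist x] with y hxy
    exact gramKernel_ballIndicator_le hlam (fun x r hr => (hball x r hr).2) hxy

theorem riesz_cross_term_vanishes_general {ι 𝕜 : Type*} [RCLike 𝕜] {l : Filter ι} [l.NeBot]
    [l.IsCountablyGenerated] (hμ : IsAhlforsRegular μ Q) (hQ : 0 < Q) (hlam : 0 < lam)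
    {f : ι → X → 𝕜} {f₀ : X → 𝕜} (hf : ∀ i, AEStronglyMeasurable (f i) μ)
    (hlim : ∀ᵐ x ∂μ, Tendsto (fun i => f i x) l (𝓝 (f₀ x))) {M : ℝ≥0∞} (hM : M ≠ ⊤)
    (hfM : ∀ i, kernelEnergy μ (rieszKernel lam) (fun x => ‖f i x‖ₑ ^ 2) ≤ M) :
    Tendsto (fun i => ∫ x, ∫ y, (conj (f i x) - conj (f₀ x)) * f₀ x * conj (f₀ y) *
        (f i y - f₀ y) * ((dist x y ^ (-lam) : ℝ) : 𝕜) ∂μ ∂μ) l (𝓝 0) := by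
  have := hμ.sigmaFinite
  have henergy := tendsto_kernelEnergy_enorm_sub_mul_enorm (measurable_rieszKernel lam)
    (hμ.isEnergyQuasiSubadditive_rieszKernel hQ hlam) hf hlim hM hfM
  exact tendsto_zero_iff_enorm_tendsto_zero.2 <|
    tendsto_of_tendsto_of_tendsto_of_le_of_le tendsto_const_nhds henergy (fun _ => zero_le)
      fun i => enorm_integral_cross_term_le_kernelEnergy (f i) f₀

end RieszKernel

/-- If `f_n → f` a.e. and the Riesz energies of the `f_n` are uniformly bounded, then
`∬ (conj f_n(x) - conj f(x)) f(x) conj f(y) (f_n(y) - f(y)) |x-y|^{-λ} dx dy → 0`. -/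
theorem riesz_cross_term_vanishes
    (d : ℕ) (hd : 1 ≤ d) (lam : ℝ) (hlam₀ : 0 < lam) (hlam₁ : lam < d)
    (f : ℕ → EuclideanSpace ℝ (Fin d) → ℂ) (f₀ : EuclideanSpace ℝ (Fin d) → ℂ)
    (hmeas : ∀ n, Measurable (f n)) (hmeas₀ : Measurable f₀)
    (hae : ∀ᵐ x : EuclideanSpace ℝ (Fin d), Tendsto (fun n => f n x) atTop (nhds (f₀ x)))
    (hriesz : ∃ M : ℝ≥0∞, M < ⊤ ∧ ∀ n, rieszEnergy d lam (f n) ≤ M) :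
    Tendsto (fun n => ∫ x, ∫ y,
        ((starRingEnd ℂ) (f n x) - (starRingEnd ℂ) (f₀ x)) * f₀ x *
          (starRingEnd ℂ) (f₀ y) * (f n y - f₀ y) * ((‖x - y‖ ^ (-lam) : ℝ) : ℂ))
      atTop (nhds (0 : ℂ)) := by
  obtain ⟨M, hM, hfM⟩ := hriesz
  have hdim : (0 : ℝ) < Module.finrank ℝ (EuclideanSpace ℝ (Fin d)) := by
    rwa [finrank_euclideanSpace_fin, Nat.cast_pos]
  simp only [rieszEnergy, ← dist_eq_norm] at hfM ⊢
  exact riesz_cross_term_vanishes_general (isAhlforsRegular_addHaar volume) hdim hlam₀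
    (fun n => (hmeas n).aestronglyMeasurable) hae hM.ne hfM
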